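/- If ℓ(C) ≥ 3, then the minimal number of generators of the S-module D₀(f) (the smallest cardinality of a generating set) is exactly m − 1; that is, C is an (m−1)-syzygy curve. -/

import Mathlib

open MvPolynomial

noncomputable abbrev S : Type := MvPolynomial (Fin 3) ℂ

/-- The gradient `∇g = (g_x, g_y, g_z)` of a polynomial `g ∈ S = ℂ[x,y,z]`. -/
noncomputable def grad (g : S) : Fin 3 → S := fun t => pderiv t g

/-- The syzygy triple `ρ_j = Σ_{i≠j} (∏_{k≠i,j} f_k) (∇f_i × ∇f_j)`
of the 2-form `ω_j = df ∧ df_j/f_j`. -/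
noncomputable def rho {m : ℕ} (F : Fin m → S) (j : Fin m) : Fin 3 → S :=
  ∑ i ∈ Finset.univ.erase j,
    (∏ k ∈ (Finset.univ.erase j).erase i, F k) • crossProduct (grad (F i)) (grad (F j))

/-- The Jacobian syzygy module `D₀(f) = {(a,b,c) ∈ S³ : a f_x + b f_y + c f_z = 0}`. -/
noncomputable def D0 (f : S) : Submodule S (Fin 3 → S) where
  carrier := {v | ∑ t, v t * pderiv t f = 0}
  add_mem' {a b} ha hb := by
    simp only [Set.mem_setOf_eq, Pi.add_apply, add_mul, Finset.sum_add_distrib] at *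
    rw [ha, hb, add_zero]
  zero_mem' := by simp
  smul_mem' c v hv := by
    simp only [Set.mem_setOf_eq, Pi.smul_apply, smul_eq_mul, mul_assoc, ← Finset.mul_sum] at *
    rw [hv, mul_zero]

/-- The syzygy triple `σ^x = (0, f_z, −f_y)` of the 2-form `df ∧ dx`. -/
noncomputable def sigx (f : S) : Fin 3 → S := ![0, pderiv 2 f, -pderiv 1 f]
/-- The syzygy triple `σ^y = (−f_z, 0, f_x)` of the 2-form `df ∧ dy`. -/
noncomputable def sigy (f : S) : Fin 3 → S := ![-pderiv 2 f, 0, pderiv 0 f]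
/-- The syzygy triple `σ^z = (f_y, −f_x, 0)` of the 2-form `df ∧ dz`. -/
noncomputable def sigz (f : S) : Fin 3 → S := ![pderiv 1 f, -pderiv 0 f, 0]

open Matrix in
/-- Nullstellensatz in the form we use. -/
theorem exists_maxpow_le (I : Ideal S)
    (h : ∀ p : Fin 3 → ℂ, (∀ a ∈ I, eval p a = 0) → p = 0) :
    ∃ N : ℕ, (Ideal.span (Set.range (X : Fin 3 → S))) ^ N ≤ I := by
  apply Ideal.exists_pow_le_of_le_radical_of_fg
  · rw [← vanishingIdeal_zeroLocus_eq_radical (K := ℂ), Ideal.span_le]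
    rintro _ ⟨i, rfl⟩
    simp only [SetLike.mem_coe, mem_vanishingIdeal_iff, mem_zeroLocus_iff]
    intro x hx
    have := h x (fun a ha => by simpa [aeval_eq_eval] using hx a ha)
    simp [this]
  · exact ⟨Finset.univ.image X, by simp⟩

theorem prime_has_zero (q : S) (hq : Prime q) : ∃ p : Fin 3 → ℂ, p ≠ 0 ∧ eval p q = 0 := by
  by_contra hcon
  push Not at hcon
  obtain ⟨N, hN⟩ := exists_maxpow_le (Ideal.span {q}) (fun p hp => by
    by_contra h0
    exact hcon p h0 (hp q (Ideal.mem_span_singleton_self q)))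
  have hX : ∀ i : Fin 3, q ∣ X i := fun i => by
    have : (X i : S) ^ N ∈ Ideal.span {q} :=
      hN (Ideal.pow_mem_pow (Ideal.subset_span (Set.mem_range_self i)) N)
    exact hq.dvd_of_dvd_pow (Ideal.mem_span_singleton.mp this)
  have h0 : Associated q (X 0 : S) :=
    (hq.dvd_prime_iff_associated (X_prime)).mp (hX 0)
  obtain ⟨r, hr⟩ := h0.symm.dvd.trans (hX 1)
  have := congrArg (eval (![0, 1, 0] : Fin 3 → ℂ)) hr
  simp at this

/-- Setting `x_0 = 0`. -/
theorem X0_dvd_sub (p : S) : (X 0 : S) ∣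
    p - aeval (fun i : Fin 3 => if i = 0 then (0 : S) else X i) p := by
  induction p using MvPolynomial.induction_on with
  | C a => simp
  | add p q hp hq =>
    rw [map_add]
    have := dvd_add hp hq
    convert this using 1
    ring
  | mul_X p i hp =>
    rw [map_mul, aeval_X]
    by_cases hi : i = 0
    · subst hi; simp
    · simp only [hi, if_false, ← sub_mul]
      exact hp.mul_right _

theorem X_not_dvd_X {i j : Fin 3} (h : i ≠ j) : ¬ (X i : S) ∣ X j := by
  rintro ⟨r, hr⟩
  have := congrArg (eval (fun k : Fin 3 => if k = j then (1 : ℂ) else 0)) hr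
  simp [h] at this

theorem X_pair {i j : Fin 3} (h : i ≠ j) {a b : S} (hab : X j * a = X i * b) :
    ∃ r, a = X i * r ∧ b = X j * r := by
  have : (X i : S) ∣ X j * a := ⟨b, hab⟩
  rcases (X_prime (i := i) (R := ℂ)).dvd_or_dvd this with h' | ⟨r, rfl⟩
  · exact absurd h' (X_not_dvd_X h)
  · refine ⟨r, rfl, ?_⟩
    apply mul_left_cancel₀ (X_ne_zero (R := ℂ) i)
    rw [← hab]; ring

/-- Exactness of the Koszul complex of the variables. -/
theorem koszul_X {c01 c02 c12 : S} (h : X 2 * c01 - X 1 * c02 + X 0 * c12 = 0) :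
    ∃ t0 t1 t2 : S, c01 = X 1 * t0 - X 0 * t1 ∧ c02 = X 2 * t0 - X 0 * t2 ∧
      c12 = X 2 * t1 - X 1 * t2 := by
  have h' := congrArg (aeval (fun i : Fin 3 => if i = 0 then (0 : S) else X i)) h
  simp only [map_add, map_sub, map_mul, aeval_X, map_zero] at h'
  rw [if_neg (by decide), if_neg (by decide), if_pos trivial] at h'
  obtain ⟨t0, h1, h2⟩ := X_pair (i := 1) (j := 2) (by decide)
    (a := aeval (fun i : Fin 3 => if i = 0 then (0 : S) else X i) c01)
    (b := aeval (fun i : Fin 3 => if i = 0 then (0 : S) else X i) c02)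
    (by linear_combination h')
  obtain ⟨t1, h3⟩ := X0_dvd_sub c01
  obtain ⟨t2, h4⟩ := X0_dvd_sub c02
  rw [h1] at h3
  rw [h2] at h4
  have e1 : c01 = X 1 * t0 - X 0 * (-t1) := by linear_combination h3
  have e2 : c02 = X 2 * t0 - X 0 * (-t2) := by linear_combination h4
  refine ⟨t0, -t1, -t2, e1, e2, ?_⟩
  apply mul_left_cancel₀ (X_ne_zero (R := ℂ) (0 : Fin 3))
  rw [e1, e2] at h
  linear_combination h

/-- The double complex chase: one step. -/
theorem chase_step {n k : ℕ} (g : Fin n → S) (hg : g ≠ 0)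
    (ψ : (Fin n → S) →ₗ[S] (Fin k → S))
    (hker : ∀ v, ψ v = 0 → ∃ c : S, v = c • g) (u : Fin k → S) (hgz : ψ g = 0)
    (hu : ∀ i : Fin 3, ∃ s, ψ s = (X i : S) • u) : ∃ s, ψ s = u := by
  choose s hs using hu
  have hc : ∀ i j : Fin 3, ∃ c : S, (X j : S) • s i - (X i : S) • s j = c • g := by
    intro i j
    apply hker
    rw [map_sub, map_smul, map_smul, hs, hs, smul_smul, smul_smul, mul_comm, sub_self]
  obtain ⟨c01, h01⟩ := hc 0 1
  obtain ⟨c02, h02⟩ := hc 0 2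
  obtain ⟨c12, h12⟩ := hc 1 2
  obtain ⟨l, hl⟩ := Function.ne_iff.mp hg
  obtain ⟨t0, t1, t2, e1, e2, e3⟩ := koszul_X (c01 := c01) (c02 := c02) (c12 := c12) (by
    apply mul_right_cancel₀ hl
    have a1 := congrFun h01 l
    have a2 := congrFun h02 l
    have a3 := congrFun h12 l
    simp only [Pi.sub_apply, Pi.smul_apply, smul_eq_mul] at a1 a2 a3
    linear_combination (-X 2) * a1 + X 1 * a2 - X 0 * a3)
  have key : ∀ l : Fin n, ∃ r : S, s 0 l - t0 * g l = X 0 * r := by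
    intro l
    have a1 := congrFun h01 l
    simp only [Pi.sub_apply, Pi.smul_apply, smul_eq_mul] at a1
    obtain ⟨r, hr, -⟩ := X_pair (i := 0) (j := 1) (by decide)
      (a := s 0 l - t0 * g l) (b := s 1 l - t1 * g l) (by
        rw [e1] at a1; linear_combination a1)
    exact ⟨r, hr⟩
  choose r hr using key
  refine ⟨r, ?_⟩
  have : s 0 - t0 • g = (X 0 : S) • r := by
    ext1 l; simpa using hr l
  have h2 := congrArg ψ this
  rw [map_sub, map_smul, map_smul, hs, hgz, smul_zero, sub_zero] at h2
  exact (smul_right_injective _ (X_ne_zero (R := ℂ) (0 : Fin 3)) h2).symm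

theorem chase {n k : ℕ} (g : Fin n → S) (hg : g ≠ 0)
    (ψ : (Fin n → S) →ₗ[S] (Fin k → S))
    (hker : ∀ v, ψ v = 0 → ∃ c : S, v = c • g) (hgz : ψ g = 0) (u : Fin k → S)
    (hu : ∀ p : Fin 3 → ℂ, (∀ a : S, (∃ s, ψ s = a • u) → eval p a = 0) → p = 0) :
    ∃ s, ψ s = u := by
  obtain ⟨N, hN⟩ := exists_maxpow_le
    ((LinearMap.range ψ).comap (LinearMap.toSpanSingleton S (Fin k → S) u)) (by
      intro p hp
      apply hu
      intro a ha
      apply hp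
      simpa using ha)
  have : ∀ a ∈ (Ideal.span (Set.range (X : Fin 3 → S))) ^ N, ∃ s, ψ s = a • u := by
    intro a ha
    simpa using hN ha
  clear hN hu
  induction N generalizing u with
  | zero => simpa using this 1 (by simp)
  | succ N ih =>
    apply chase_step g hg ψ hker u hgz
    intro i
    apply ih
    intro a ha
    rw [smul_smul]
    apply this
    rw [pow_succ]
    exact Ideal.mul_mem_mul ha (Ideal.subset_span ⟨i, rfl⟩)

theorem dvd_of_dvd_mul_all {n : ℕ} (g : Fin n → S) (hg : ∀ q : S, Prime q → ¬ ∀ t, q ∣ g t)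
    (a : S) : ∀ u : S, a ≠ 0 → (∀ t, a ∣ u * g t) → a ∣ u := by
  induction a using UniqueFactorizationMonoid.induction_on_prime with
  | h₁ => intro u h; exact absurd rfl h
  | h₂ x hx => intro u _ _; exact hx.dvd
  | h₃ a q ha hq ih =>
    intro u h0 h
    have : q ∣ u := by
      by_contra hn
      apply hg q hq
      intro t
      exact (hq.dvd_or_dvd ((Dvd.intro _ rfl).trans (h t))).resolve_left hn
    obtain ⟨u, rfl⟩ := this
    apply mul_dvd_mul_left
    apply ih _ ha
    intro t
    have := h t
    rw [mul_assoc] at this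
    exact (mul_dvd_mul_iff_left hq.ne_zero).mp this

open Matrix in
theorem koszul2 (g u : Fin 3 → S) (hg : ∀ q : S, Prime q → ¬ ∀ t, q ∣ g t)
    (h : g ⨯₃ u = 0) : ∃ c : S, u = c • g := by
  have hg0 : g ≠ 0 := by
    rintro rfl
    exact hg (X 0) X_prime (by simp)
  obtain ⟨i, hi⟩ := Function.ne_iff.mp hg0
  have hc : ∀ i j, u i * g j = u j * g i := by
    rw [cross_apply] at h
    have a0 := congrFun h 0
    have a1 := congrFun h 1
    have a2 := congrFun h 2
    simp at a0 a1 a2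
    intro i j
    fin_cases i <;> fin_cases j <;> simp <;> grind
  obtain ⟨c, hc'⟩ := dvd_of_dvd_mul_all g hg (g i) (u i) hi (fun t => ⟨u t, by rw [hc]; ring⟩)
  refine ⟨c, funext fun j => mul_right_cancel₀ hi ?_⟩
  rw [← hc, hc']
  simp; ring

open Matrix in
theorem koszul1 (g u : Fin 3 → S)
    (hg : ∀ p : Fin 3 → ℂ, (∀ t, eval p (g t) = 0) → p = 0)
    (h : g ⬝ᵥ u = 0) : ∃ s, g ⨯₃ s = u := by
  have hg' : ∀ q : S, Prime q → ¬ ∀ t, q ∣ g t := by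
    intro q hq hall
    obtain ⟨p, hp, hpq⟩ := prime_has_zero q hq
    apply hp
    apply hg
    intro t
    obtain ⟨r, hr⟩ := hall t
    rw [hr, map_mul, hpq, zero_mul]
  have hg0 : g ≠ 0 := by
    rintro rfl
    exact hg' (X 0) X_prime (by simp)
  apply chase g hg0 (crossProduct g) (fun v hv => koszul2 g v hg' hv) (cross_self g) u
  intro p hp
  apply hg
  intro t
  apply hp
  refine ⟨-((Pi.single t 1 : Fin 3 → S) ⨯₃ u), ?_⟩
  simp only [dotProduct, Fin.sum_univ_three] at h
  ext1 l
  rw [map_neg, cross_apply, cross_apply]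
  fin_cases t <;> fin_cases l <;> simp <;> grind

/-- Unmixedness of complete intersections `(p, q)`. -/
theorem ci_mem (p q b : S) (hp : p ≠ 0) (hpq : IsRelPrime p q)
    (hu : ∀ x : Fin 3 → ℂ, (∀ a : S, (∃ α β : S, α * p + β * q = a * b) → eval x a = 0) → x = 0) :
    ∃ α β : S, α * p + β * q = b := by
  let ψ : (Fin 2 → S) →ₗ[S] (Fin 1 → S) :=
    { toFun := fun v _ => v 0 * p + v 1 * q
      map_add' := by intro v w; ext1 l; simp; ring
      map_smul' := by intro v w; ext1 l; simp; ring }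
  have hψ : ∀ v w, ψ v = w ↔ v 0 * p + v 1 * q = w 0 := by
    intro v w
    constructor
    · intro h; exact congrFun h 0
    · intro h; ext1 l; fin_cases l; exact h
  obtain ⟨s, hs⟩ := chase (n := 2) ![q, -p] (by
      intro h; have := congrFun h 1; simp at this; exact hp this) ψ (by
      intro v hv
      rw [hψ] at hv
      simp only [Pi.zero_apply] at hv
      have : p ∣ v 1 := hpq.dvd_of_dvd_mul_right (y := v 1) (z := q) ⟨-v 0, by linear_combination hv⟩
      obtain ⟨c, hc⟩ := this
      refine ⟨-c, ?_⟩
      ext1 l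
      fin_cases l
      · apply mul_right_cancel₀ hp
        rw [hc] at hv
        simp; linear_combination hv
      · simp [hc]; ring) (by rw [hψ]; simp; ring) (fun _ => b) (by
      intro x hx
      apply hu
      rintro a ⟨α, β, h⟩
      apply hx
      exact ⟨![α, β], by rw [hψ]; simpa using h⟩)
  rw [hψ] at hs
  exact ⟨_, _, hs⟩

/-- The hypotheses on the curve, bundled. -/
structure NCHyp {m : ℕ} (F : Fin m → S) (e : Fin m → ℕ) : Prop where
  he : ∀ j, 1 ≤ e j
  hhom : ∀ j, (F j).IsHomogeneous (e j)
  hsmooth : ∀ j, ∀ p : Fin 3 → ℂ, (∀ t, eval p (pderiv t (F j)) = 0) → p = 0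
  hnc : ∀ i j : Fin m, i ≠ j → ∀ p : Fin 3 → ℂ, p ≠ 0 →
      eval p (F i) = 0 → eval p (F j) = 0 →
      LinearIndependent ℂ
        ![fun t => eval p (pderiv t (F i)), fun t => eval p (pderiv t (F j))]
  htriple : ∀ i j k : Fin m, i ≠ j → i ≠ k → j ≠ k → ∀ p : Fin 3 → ℂ, p ≠ 0 →
      ¬(eval p (F i) = 0 ∧ eval p (F j) = 0 ∧ eval p (F k) = 0)

/-- The product of all the `F k` with `k ≠ j`. -/
noncomputable def cof {m : ℕ} (F : Fin m → S) (j : Fin m) : S := ∏ k ∈ Finset.univ.erase j, F k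

theorem mul_cof {m : ℕ} (F : Fin m → S) (j : Fin m) : F j * cof F j = ∏ i, F i :=
  Finset.mul_prod_erase _ _ (Finset.mem_univ j)

theorem grad_mul (a b : S) : grad (a * b) = a • grad b + b • grad a := by
  ext1 t
  simp [grad, Derivation.leibniz]

theorem grad_prod_aux {m : ℕ} (F : Fin m → S) (s : Finset (Fin m)) :
    grad (∏ i ∈ s, F i) = ∑ j ∈ s, (∏ k ∈ s.erase j, F k) • grad (F j) := by
  induction s using Finset.induction_on with
  | empty => ext1 t; simp [grad]
  | insert a s ha ih =>
    rw [Finset.prod_insert ha, grad_mul, ih, Finset.sum_insert ha, Finset.erase_insert ha, add_comm,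
      Finset.smul_sum]
    congr 1
    apply Finset.sum_congr rfl
    intro j hj
    have : a ≠ j := by rintro rfl; exact ha hj
    rw [Finset.erase_insert_of_ne this, Finset.prod_insert (by simp [ha]), smul_smul]

theorem grad_prod {m : ℕ} (F : Fin m → S) :
    grad (∏ i, F i) = ∑ j, cof F j • grad (F j) := grad_prod_aux F Finset.univ

open Matrix in
theorem mul_rho {m : ℕ} (F : Fin m → S) (j : Fin m) :
    F j • rho F j = grad (∏ i, F i) ⨯₃ grad (F j) := by
  rw [grad_prod, map_sum, LinearMap.sum_apply, rho, Finset.smul_sum,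
    ← Finset.add_sum_erase _ _ (Finset.mem_univ j)]
  rw [map_smul, LinearMap.smul_apply, cross_self, smul_zero, zero_add]
  apply Finset.sum_congr rfl
  intro i hi
  rw [map_smul, LinearMap.smul_apply, smul_smul]
  congr 1
  have hij : j ∈ Finset.univ.erase i := by
    simp at hi ⊢; exact fun h => hi h.symm
  rw [cof, ← Finset.mul_prod_erase _ _ hij, Finset.erase_right_comm]

namespace NCHyp

variable {m : ℕ} {F : Fin m → S} {e : Fin m → ℕ}

theorem ne_zero (H : NCHyp F e) (j : Fin m) : F j ≠ 0 := by
  intro h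
  have := H.hsmooth j (fun _ => 1) (by simp [h])
  exact one_ne_zero (congrFun this 0)

theorem prod_ne_zero (H : NCHyp F e) : ∏ i, F i ≠ 0 :=
  Finset.prod_ne_zero_iff.mpr fun j _ => H.ne_zero j

theorem relPrime (H : NCHyp F e) {i j : Fin m} (hij : i ≠ j) : IsRelPrime (F i) (F j) := by
  apply WfDvdMonoid.isRelPrime_of_no_irreducible_factors
  · intro h; exact H.ne_zero i h.1
  · rintro q hq ⟨a, ha⟩ ⟨b, hb⟩
    obtain ⟨p, hp, hpq⟩ := prime_has_zero q hq.prime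
    have := H.hnc i j hij p hp (by simp [ha, hpq]) (by simp [hb, hpq])
    rw [← crossProduct_ne_zero_iff_linearIndependent] at this
    apply this
    rw [cross_apply]
    ext1 l
    fin_cases l <;> simp [ha, hb, hpq, Derivation.leibniz] <;> ring

theorem relPrime_cof (H : NCHyp F e) (j : Fin m) : IsRelPrime (F j) (cof F j) := by
  apply IsRelPrime.prod_right
  intro i hi
  exact H.relPrime (Finset.ne_of_mem_erase hi).symm

theorem no_prime (H : NCHyp F e) (j : Fin m) (q : S) (hq : Prime q) :
    ¬ ∀ t, q ∣ grad (F j) t := by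
  intro hall
  obtain ⟨p, hp, hpq⟩ := prime_has_zero q hq
  apply hp
  apply H.hsmooth j
  intro t
  obtain ⟨r, hr⟩ := hall t
  change eval p (grad (F j) t) = 0
  rw [hr, map_mul, hpq, zero_mul]

open Matrix in
theorem euler (H : NCHyp F e) (j : Fin m) : X ⬝ᵥ grad (F j) = (e j : S) * F j := by
  have := (H.hhom j).sum_X_mul_pderiv
  rw [nsmul_eq_mul] at this
  exact this

open Matrix in
theorem euler_prod (H : NCHyp F e) :
    X ⬝ᵥ grad (∏ i, F i) = ((∑ i, e i : ℕ) : S) * ∏ i, F i := by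
  have := (IsHomogeneous.prod Finset.univ F e (fun j _ => H.hhom j)).sum_X_mul_pderiv
  rw [nsmul_eq_mul] at this
  exact this

theorem mem_D0 (f : S) (v : Fin 3 → S) : v ∈ D0 f ↔ grad f ⬝ᵥ v = 0 := by
  rw [dotProduct_comm]; rfl

open Matrix in
theorem rho_mem (H : NCHyp F e) (j : Fin m) : rho F j ∈ D0 (∏ i, F i) := by
  rw [mem_D0]
  apply mul_left_cancel₀ (H.ne_zero j)
  rw [mul_zero, ← smul_eq_mul, ← dotProduct_smul, mul_rho, dot_self_cross]

open Matrix in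
theorem prod_smul_rho (F : Fin m → S) (j : Fin m) :
    (∏ i, F i) • rho F j = grad (∏ i, F i) ⨯₃ (cof F j • grad (F j)) := by
  rw [map_smul, ← mul_rho, smul_smul, ← mul_cof F j, mul_comm]

theorem sum_rho (H : NCHyp F e) : ∑ j, rho F j = 0 := by
  apply smul_right_injective _ H.prod_ne_zero
  simp only [smul_zero]
  rw [Finset.smul_sum]
  simp only [prod_smul_rho]
  rw [← map_sum, ← grad_prod, cross_self]

theorem dvd_theta (H : NCHyp F e) {v : Fin 3 → S} (hv : v ∈ D0 (∏ i, F i)) (j : Fin m) :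
    F j ∣ grad (F j) ⬝ᵥ v := by
  rw [mem_D0, grad_prod, sum_dotProduct, ← Finset.add_sum_erase _ _ (Finset.mem_univ j)] at hv
  simp only [smul_dotProduct, smul_eq_mul] at hv
  apply (H.relPrime_cof j).dvd_of_dvd_mul_left
  rw [eq_neg_of_add_eq_zero_left hv, dvd_neg]
  apply Finset.dvd_sum
  intro i hi
  apply Dvd.dvd.mul_right
  apply Finset.dvd_prod_of_mem
  simp at hi ⊢
  exact fun h => hi h.symm

open Matrix in
theorem exists_res (H : NCHyp F e) {v : Fin 3 → S} (hv : v ∈ D0 (∏ i, F i)) (j : Fin m) :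
    ∃ (b : S) (s : Fin 3 → S), X ⨯₃ v = F j • s + b • grad (F j) := by
  obtain ⟨h, hh⟩ := H.dvd_theta hv j
  obtain ⟨s, hs⟩ := koszul1 (grad (F j)) (h • X - (e j : S) • v) (H.hsmooth j) (by
    rw [dotProduct_sub, dotProduct_smul, dotProduct_smul, hh, dotProduct_comm, H.euler]
    simp only [smul_eq_mul]; ring)
  obtain ⟨b, hb⟩ := koszul2 (grad (F j)) (X ⨯₃ v - F j • s) (H.no_prime j) (by
    rw [map_sub, map_smul, hs, cross_cross_eq_smul_sub_smul', hh, H.euler]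
    ext1 t
    simp; ring)
  exact ⟨b, s, by rw [← hb]; abel⟩

theorem eval_cross (p : Fin 3 → ℂ) (a b : Fin 3 → S) (t : Fin 3) :
    eval p (crossProduct a b t) =
      crossProduct (fun t => eval p (a t)) (fun t => eval p (b t)) t := by
  rw [cross_apply, cross_apply]
  fin_cases t <;> simp

theorem cross_mem {g h w s r : Fin 3 → S} {f f' b c : S} (h1 : w = f • s + b • g)
    (h2 : w = f' • r + c • h) (t : Fin 3) :
    ∃ α β : S, α * f + β * f' = crossProduct g h t * b := by
  have e1 : f • s + b • g = f' • r + c • h := by rw [← h1, h2]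
  have e2 := congrArg (fun x => crossProduct x h t) e1
  simp only [map_add, map_smul, LinearMap.add_apply, LinearMap.smul_apply, cross_self,
      Pi.add_apply, Pi.smul_apply, smul_eq_mul, Pi.zero_apply, mul_zero, add_zero] at e2
  refine ⟨-(crossProduct s h t), crossProduct r h t, ?_⟩
  generalize crossProduct s h t = A at *
  generalize crossProduct g h t = B at *
  generalize crossProduct r h t = D at *
  linear_combination -e2

theorem res_mem (H : NCHyp F e) {w : Fin 3 → S} {i j : Fin m} (hij : i ≠ j)
    {b c : S} {s r : Fin 3 → S} (h1 : w = F i • s + b • grad (F i))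
    (h2 : w = F j • r + c • grad (F j)) : ∃ α β : S, α * F i + β * F j = b := by
  apply ci_mem _ _ _ (H.ne_zero i) (H.relPrime hij)
  intro p hp
  have hi := hp (F i) ⟨b, 0, by ring⟩
  have hj := hp (F j) ⟨0, b, by ring⟩
  by_contra hp0
  have := H.hnc i j hij p hp0 hi hj
  rw [← crossProduct_ne_zero_iff_linearIndependent] at this
  apply this
  ext1 t
  have := hp _ (cross_mem h1 h2 t)
  rw [eval_cross] at this
  exact this

theorem res_mem_prod (H : NCHyp F e) (j : Fin m) (b : S)
    (hb : ∀ k, k ≠ j → ∃ α β : S, α * F j + β * F k = b) (s : Finset (Fin m)) (hs : j ∉ s) :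
    ∃ α β : S, α * F j + β * (∏ k ∈ s, F k) = b := by
  induction s using Finset.induction_on with
  | empty => exact ⟨0, b, by simp⟩
  | insert k s hk ih =>
    simp only [Finset.mem_insert, not_or] at hs
    obtain ⟨α, β, h⟩ := ih hs.2
    obtain ⟨α', β', h'⟩ := hb k (Ne.symm hs.1)
    obtain ⟨γ, δ, h''⟩ := ci_mem (F j) (F k) β (H.ne_zero j) (H.relPrime hs.1) (by
      intro p hp
      have hi := hp (F j) ⟨β, 0, by ring⟩
      have hj := hp (F k) ⟨0, β, by ring⟩
      have hP := hp (∏ k ∈ s, F k) ⟨α' - α, β', by linear_combination h' - h⟩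
      rw [map_prod, Finset.prod_eq_zero_iff] at hP
      obtain ⟨l, hl, hl0⟩ := hP
      by_contra hp0
      refine H.htriple j k l hs.1 ?_ ?_ p hp0 ⟨hi, hj, hl0⟩
      · rintro rfl; exact hs.2 hl
      · rintro rfl; exact hk hl)
    refine ⟨α + γ * ∏ k ∈ s, F k, δ, ?_⟩
    rw [Finset.prod_insert hk]
    linear_combination h + (∏ k ∈ s, F k) * h''

open Matrix in
theorem exists_log (H : NCHyp F e) {v : Fin 3 → S} (hv : v ∈ D0 (∏ i, F i)) :
    ∃ (a : Fin m → S) (s : Fin 3 → S),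
      X ⨯₃ v = (∑ j, a j • cof F j • grad (F j)) + (∏ i, F i) • s := by
  choose b s hs using H.exists_res hv
  have : ∀ j, ∃ α β : S, α * F j + β * cof F j = b j := fun j =>
    H.res_mem_prod j (b j) (fun k hk => H.res_mem hk.symm (hs j) (hs k)) _ (by simp)
  choose α a ha using this
  have hd : ∀ t, (∏ i, F i) ∣ ((X ⨯₃ v) - ∑ j, a j • cof F j • grad (F j)) t := by
    intro t
    apply Fintype.prod_dvd_of_isRelPrime
    · intro i j hij; exact H.relPrime hij
    · intro j
      rw [← Finset.add_sum_erase _ _ (Finset.mem_univ j)]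
      have : ((X ⨯₃ v) - (a j • cof F j • grad (F j) +
          ∑ i ∈ Finset.univ.erase j, a i • cof F i • grad (F i))) t =
          F j * (s j t + α j * grad (F j) t)
            - ∑ i ∈ Finset.univ.erase j, (a i • cof F i • grad (F i)) t := by
        rw [Pi.sub_apply, Pi.add_apply, Finset.sum_apply, hs j]
        simp only [Pi.add_apply, Pi.smul_apply, smul_eq_mul]
        linear_combination (- grad (F j) t) * ha j
      rw [this]
      apply dvd_sub (Dvd.intro _ rfl)
      apply Finset.dvd_sum
      intro i hi
      simp only [Pi.smul_apply, smul_eq_mul]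
      apply Dvd.dvd.mul_left
      apply Dvd.dvd.mul_right
      apply Finset.dvd_prod_of_mem
      simp at hi ⊢
      exact fun h => hi h.symm
  choose r hr using hd
  refine ⟨a, r, ?_⟩
  rw [← sub_eq_iff_eq_add']
  ext1 t
  rw [hr]; simp

/-- Three lines without common point: their gradients span `S³`. -/
theorem lines_span (H : NCHyp F e) (hl : 3 ≤ (Finset.univ.filter (fun j => e j = 1)).card)
    (s : Fin 3 → S) : ∃ c : Fin m → S, s = ∑ j, c j • grad (F j) := by
  obtain ⟨A, hA, hA3⟩ := Finset.exists_subset_card_eq hl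
  obtain ⟨x, y, z, hxy, hxz, hyz, rfl⟩ := Finset.card_eq_three.mp hA3
  let n : Fin 3 → Fin m := ![x, y, z]
  have hn : ∀ i, e (n i) = 1 := by
    intro i
    have : n i ∈ ({x, y, z} : Finset (Fin m)) := by fin_cases i <;> simp [n]
    simpa using hA this
  have hC : ∀ i t, ∃ c : ℂ, pderiv t (F (n i)) = C c := by
    intro i t
    have := (H.hhom (n i)).pderiv (i := t)
    rw [hn i] at this
    exact ⟨_, totalDegree_eq_zero_iff_eq_C.mp (Nat.le_zero.mp this.totalDegree_le)⟩
  choose M hM using hC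
  have hdet : (Matrix.of M).det ≠ 0 := by
    intro h0
    obtain ⟨p, hp, hp0⟩ := Matrix.exists_mulVec_eq_zero_iff.mpr h0
    have : ∀ i, eval p (F (n i)) = 0 := by
      intro i
      have e1 := congrArg (eval p) (H.euler (n i))
      have e2 := congrFun hp0 i
      simp [Matrix.mulVec, dotProduct, Fin.sum_univ_three, grad, hM, hn] at e1 e2
      rw [← e1]; linear_combination e2
    exact H.htriple x y z hxy hxz hyz p hp ⟨this 0, this 1, this 2⟩
  let A : Matrix (Fin 3) (Fin 3) S := (Matrix.of M).map C
  have hAdet : IsUnit A.det := by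
    have : A.det = C (Matrix.of M).det := (RingHom.map_det C _).symm
    rw [this]
    exact (isUnit_iff_ne_zero.mpr hdet).map C
  have hs : Matrix.vecMul (Matrix.vecMul s A⁻¹) A = s := by
    rw [Matrix.vecMul_vecMul, Matrix.nonsing_inv_mul _ hAdet, Matrix.vecMul_one]
  set c := Matrix.vecMul s A⁻¹
  refine ⟨∑ i, Pi.single (n i) (c i), ?_⟩
  have : ∀ i, ∑ j, (Pi.single (n i) (c i) : Fin m → S) j • grad (F j) = c i • grad (F (n i)) := by
    intro i
    rw [Finset.sum_eq_single (n i)]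
    · simp
    · intro b _ hb; simp [hb]
    · simp
  simp only [Finset.sum_apply, Finset.sum_smul]
  rw [Finset.sum_comm]
  simp only [this]
  rw [← hs]
  ext1 t
  simp [Matrix.vecMul, dotProduct, A, grad, hM]

theorem sum_e_ne (H : NCHyp F e) (hm : 4 ≤ m) : (∑ i, e i : ℕ) ≠ 0 := by
  have := Finset.single_le_sum (f := e) (fun i _ => Nat.zero_le _)
    (Finset.mem_univ (⟨0, by omega⟩ : Fin m))
  have := H.he ⟨0, by omega⟩
  omega

open Matrix in
theorem mem_span (H : NCHyp F e) (hm : 4 ≤ m)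
    (hl : 3 ≤ (Finset.univ.filter (fun j => e j = 1)).card)
    {v : Fin 3 → S} (hv : v ∈ D0 (∏ i, F i)) : ∃ a : Fin m → S, v = ∑ j, a j • rho F j := by
  obtain ⟨a, s, hs⟩ := H.exists_log hv
  obtain ⟨c, hc⟩ := H.lines_span hl s
  set d : ℕ := ∑ i, e i with hd
  have hd0 : (d : ℂ) ≠ 0 := Nat.cast_ne_zero.mpr (H.sum_e_ne hm)
  have h1 : (∏ i, F i) • s = ∑ j, (c j * F j) • cof F j • grad (F j) := by
    rw [hc, Finset.smul_sum]
    apply Finset.sum_congr rfl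
    intro j _
    rw [← mul_cof F j, smul_smul, smul_smul]
    congr 1; ring
  rw [h1, ← Finset.sum_add_distrib] at hs
  simp only [← add_smul] at hs
  have h2 := congrArg (crossProduct (grad (∏ i, F i))) hs
  rw [cross_cross_eq_smul_sub_smul', (mem_D0 _ _).mp hv, H.euler_prod, zero_smul, zero_sub,
    map_sum] at h2
  simp only [map_smul _ (_ + _ : S), ← prod_smul_rho] at h2
  simp only [smul_comm _ (∏ i, F i)] at h2
  rw [← Finset.smul_sum] at h2
  have h3 : -((d : S) • v) = ∑ x, (a x + c x * F x) • rho F x := by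
    apply smul_right_injective _ H.prod_ne_zero
    simp only
    rw [← h2, smul_neg, smul_smul, mul_comm, hd]
  refine ⟨fun x => C (-(d : ℂ)⁻¹) * (a x + c x * F x), ?_⟩
  simp only [mul_smul]
  rw [← Finset.smul_sum, ← h3, smul_neg, smul_smul, ← neg_smul]
  have : -(C (-(d : ℂ)⁻¹) * (d : S)) = 1 := by
    rw [← map_natCast (C : ℂ →+* S) d, ← map_mul, ← map_neg, neg_mul, neg_neg,
      inv_mul_cancel₀ hd0, map_one]
  rw [this, one_smul]

end NCHyp

theorem exists_prime_vanishing (a : S) : a ≠ 0 → eval (0 : Fin 3 → ℂ) a = 0 →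
    ∃ q : S, Prime q ∧ q ∣ a ∧ eval (0 : Fin 3 → ℂ) q = 0 := by
  induction a using UniqueFactorizationMonoid.induction_on_prime with
  | h₁ => intro h; exact absurd rfl h
  | h₂ x hx => intro _ h; exact absurd h (hx.map (eval (0 : Fin 3 → ℂ))).ne_zero
  | h₃ a q ha hq ih =>
    intro _ h
    rw [map_mul, mul_eq_zero] at h
    rcases h with h | h
    · exact ⟨q, hq, Dvd.intro _ rfl, h⟩
    · obtain ⟨r, h1, h2, h3⟩ := ih ha h
      exact ⟨r, h1, h2.mul_left q, h3⟩

namespace NCHyp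

variable {m : ℕ} {F : Fin m → S} {e : Fin m → ℕ}

theorem eval_zero (H : NCHyp F e) (j : Fin m) : eval (0 : Fin 3 → ℂ) (F j) = 0 := by
  have h := congrArg (eval (0 : Fin 3 → ℂ)) (H.euler j)
  have : (e j : ℂ) ≠ 0 := Nat.cast_ne_zero.mpr (by have := H.he j; omega)
  simpa [dotProduct, this] using h.symm

open Matrix in
theorem relation (H : NCHyp F e) (hm : 4 ≤ m) (a : Fin m → S) (h : ∑ j, a j • rho F j = 0) :
    ∃ c : ℂ, ∀ j, eval (0 : Fin 3 → ℂ) (a j) = c := by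
  set d : ℕ := ∑ i, e i with hd
  have hd0 : (d : ℂ) ≠ 0 := Nat.cast_ne_zero.mpr (H.sum_e_ne hm)
  set W : Fin 3 → S := ∑ j, a j • cof F j • grad (F j) with hW
  have h1 : grad (∏ i, F i) ⨯₃ W = 0 := by
    rw [hW, map_sum]
    have : ∀ j, grad (∏ i, F i) ⨯₃ (a j • cof F j • grad (F j)) =
        (∏ i, F i) • (a j • rho F j) := by
      intro j
      rw [map_smul, ← prod_smul_rho, smul_comm]
    simp only [this]
    rw [← Finset.smul_sum, h, smul_zero]
  have h2 : X ⬝ᵥ W = (∏ i, F i) * ∑ j, a j * (e j : S) := by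
    rw [hW, dotProduct_sum, Finset.mul_sum]
    apply Finset.sum_congr rfl
    intro j _
    rw [dotProduct_smul, dotProduct_smul, H.euler, ← mul_cof F j]
    simp only [smul_eq_mul]; ring
  set G : S := ∑ j, a j * (e j : S) with hG
  have h3 := congrArg (crossProduct (X : Fin 3 → S)) h1
  rw [cross_cross_eq_smul_sub_smul', map_zero, h2, dotProduct_comm, H.euler_prod, ← hd,
    mul_comm (d : S), mul_smul, mul_smul, ← smul_sub] at h3
  have h4 : G • grad (∏ i, F i) - (d : S) • W = 0 := by
    apply smul_right_injective _ H.prod_ne_zero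
    simpa using h3
  have h5 : ∑ j, (G - (d : S) * a j) • cof F j • grad (F j) = 0 := by
    rw [← h4, grad_prod, hW, Finset.smul_sum, Finset.smul_sum, ← Finset.sum_sub_distrib]
    apply Finset.sum_congr rfl
    intro j _
    rw [sub_smul, mul_smul]
  refine ⟨(d : ℂ)⁻¹ * eval 0 G, fun j => ?_⟩
  obtain ⟨q, hq, hqF, hq0⟩ := exists_prime_vanishing (F j) (H.ne_zero j) (H.eval_zero j)
  have h6 : ¬ q ∣ cof F j := by
    intro hc
    exact hq.not_unit ((H.relPrime_cof j) hqF hc)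
  have h7 : q ∣ G - (d : S) * a j := by
    by_contra hn
    apply H.no_prime j q hq
    intro t
    have h8 := congrFun h5 t
    rw [← Finset.add_sum_erase _ _ (Finset.mem_univ j), Pi.add_apply, Finset.sum_apply] at h8
    have h9 : q ∣ ((G - (d : S) * a j) • cof F j • grad (F j)) t := by
      rw [eq_neg_of_add_eq_zero_left h8, dvd_neg]
      apply Finset.dvd_sum
      intro i hi
      simp only [Pi.smul_apply, smul_eq_mul]
      apply Dvd.dvd.mul_left
      apply Dvd.dvd.mul_right
      apply hqF.trans
      apply Finset.dvd_prod_of_mem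
      simp at hi ⊢
      exact fun h => hi h.symm
    simp only [Pi.smul_apply, smul_eq_mul] at h9
    exact ((hq.dvd_or_dvd h9).resolve_left hn |> hq.dvd_or_dvd).resolve_left h6
  obtain ⟨r, hr⟩ := h7
  have h8 := congrArg (eval (0 : Fin 3 → ℂ)) hr
  simp only [map_sub, map_mul, hq0, zero_mul, map_natCast] at h8
  rw [sub_eq_zero.mp h8, inv_mul_cancel_left₀ hd0]

theorem lower (H : NCHyp F e) (hm : 4 ≤ m)
    (hl : 3 ≤ (Finset.univ.filter (fun j => e j = 1)).card) (T : Finset (Fin 3 → S))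
    (hT : Submodule.span S (T : Set (Fin 3 → S)) = D0 (∏ i, F i)) : m ≤ T.card + 1 := by
  have hA : ∀ t : T, ∃ a : Fin m → S, (t : Fin 3 → S) = ∑ j, a j • rho F j := fun t =>
    H.mem_span hm hl (hT ▸ Submodule.subset_span t.2)
  choose A hA using hA
  have hB : ∀ j, ∃ b : T → S, ∑ t, b t • (t : Fin 3 → S) = rho F j := by
    intro j
    have := H.rho_mem j
    rw [← hT] at this
    rw [← Submodule.mem_span_range_iff_exists_fun]
    simpa using this
  choose B hB using hB
  have hrel : ∀ j, ∃ c : ℂ, ∀ k,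
      eval (0 : Fin 3 → ℂ) ((∑ t, B j t * A t k) - if j = k then 1 else 0) = c := by
    intro j
    apply H.relation hm
    simp only [sub_smul, Finset.sum_sub_distrib, Finset.sum_smul, ite_smul, one_smul, zero_smul]
    rw [Finset.sum_comm]
    simp only [mul_smul, ← Finset.smul_sum, ← hA, hB]
    simp
  choose c hc using hrel
  let L : Matrix (Fin m) (Option T) ℂ := Matrix.of fun j o =>
    o.elim (-c j) fun t => eval 0 (B j t)
  let R : Matrix (Option T) (Fin m) ℂ := Matrix.of fun o k =>
    o.elim 1 fun t => eval 0 (A t k)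
  have hLR : L * R = 1 := by
    ext j k
    have := hc j k
    rw [Matrix.mul_apply, Fintype.sum_option, Matrix.one_apply]
    simp only [map_sub, map_sum, map_mul] at this
    simp only [L, R, Matrix.of_apply, Option.elim]
    rw [apply_ite (eval (0 : Fin 3 → ℂ)), map_one, map_zero] at this
    linear_combination this
  have h1 := Matrix.rank_mul_le_left L R
  rw [hLR, Matrix.rank_one, Fintype.card_fin] at h1
  have h2 := L.rank_le_card_width
  rw [Fintype.card_option, Fintype.card_coe] at h2
  omega

theorem upper (H : NCHyp F e) (hm : 4 ≤ m)
    (hl : 3 ≤ (Finset.univ.filter (fun j => e j = 1)).card) :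
    ∃ T : Finset (Fin 3 → S), T.card ≤ m - 1 ∧
      Submodule.span S (T : Set (Fin 3 → S)) = D0 (∏ i, F i) := by
  classical
  let j0 : Fin m := ⟨0, by omega⟩
  refine ⟨(Finset.univ.erase j0).image (rho F), ?_, ?_⟩
  · refine Finset.card_image_le.trans ?_
    rw [Finset.card_erase_of_mem (Finset.mem_univ _), Finset.card_fin]
  · apply le_antisymm
    · rw [Submodule.span_le]
      intro v hv
      simp only [Finset.coe_image, Set.mem_image] at hv
      obtain ⟨j, -, rfl⟩ := hv
      exact H.rho_mem j
    · intro v hv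
      obtain ⟨a, rfl⟩ := H.mem_span hm hl hv
      have h1 : ∀ j, j ≠ j0 → rho F j ∈ Submodule.span S
          (((Finset.univ.erase j0).image (rho F) : Finset (Fin 3 → S)) : Set (Fin 3 → S)) := by
        intro j hj
        apply Submodule.subset_span
        exact Finset.mem_coe.mpr (Finset.mem_image_of_mem _ (by simp [hj]))
      apply Submodule.sum_mem
      intro j _
      apply Submodule.smul_mem
      by_cases hj : j = j0
      · subst hj
        have := H.sum_rho
        rw [← Finset.add_sum_erase _ _ (Finset.mem_univ j0)] at this
        rw [eq_neg_of_add_eq_zero_left this]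
        apply Submodule.neg_mem
        apply Submodule.sum_mem
        intro i hi
        exact h1 i (Finset.ne_of_mem_erase hi)
      · exact h1 j hj

end NCHyp

/-- if `ℓ(C) ≥ 3` then the minimal number of generators of the `S`-module
`D₀(f)` is exactly `m − 1`: `C` is an `(m−1)`-syzygy curve. -/
theorem numGenerators_of_ell_ge_three
    (m : ℕ) (hm : 4 ≤ m) (F : Fin m → S) (e : Fin m → ℕ)
    (he : ∀ j, 1 ≤ e j)
    (hhom : ∀ j, (F j).IsHomogeneous (e j))
    (hsmooth : ∀ j, ∀ p : Fin 3 → ℂ,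
      (∀ t, eval p (pderiv t (F j)) = 0) → p = 0)
    (hnc : ∀ i j : Fin m, i ≠ j → ∀ p : Fin 3 → ℂ, p ≠ 0 →
      eval p (F i) = 0 → eval p (F j) = 0 →
      LinearIndependent ℂ
        ![fun t => eval p (pderiv t (F i)), fun t => eval p (pderiv t (F j))])
    (htriple : ∀ i j k : Fin m, i ≠ j → i ≠ k → j ≠ k → ∀ p : Fin 3 → ℂ, p ≠ 0 →
      ¬(eval p (F i) = 0 ∧ eval p (F j) = 0 ∧ eval p (F k) = 0))
    (hl : 3 ≤ (Finset.univ.filter (fun j => e j = 1)).card) :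
    IsLeast {n : ℕ | ∃ T : Finset (Fin 3 → S),
        T.card = n ∧ Submodule.span S (T : Set (Fin 3 → S)) = D0 (∏ i, F i)}
      (m - 1) := by
  have H : NCHyp F e := ⟨he, hhom, hsmooth, hnc, htriple⟩
  constructor
  · obtain ⟨T, hT, hspan⟩ := H.upper hm hl
    have := H.lower hm hl T hspan
    exact ⟨T, by omega, hspan⟩
  · rintro n ⟨T, rfl, hspan⟩
    have := H.lower hm hl T hspan
    omega
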